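/- arXiv:1011.1835 — 6 statements merged into one kernel-verified Lean document; each statement's English description precedes it below -/
import Mathlib

section
/- Let a₁,…,aₙ be distinct reals and b₁,…,bₙ reals, A = diag(a₁,…,aₙ), B = diag(b₁,…,bₙ), and let 𝔸 be the linear operator on skew-symmetric n×n real matrices defined by (𝔸ξ)_{ij} = ((b_i−b_j)/(a_i−a_j))·ξ_{ij}. Suppose differentiable curves X(t), P(t) of n×r real matrices satisfy the Manakov submersion geodesic equations Ẋ = 𝔸(Φ)·X and Ṗ = 𝔸(Φ)·P, where Φ = PXᵀ − XPᵀ. Then for every real λ the matrix Lax equation holds: d/dt (Φ + λA) = [𝔸(Φ) + λB, Φ + λA]. -/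
open Matrix

/-!
Let `W = 𝔸(Φ)`. Since `Φ` is skew and the multipliers `(bᵢ - bⱼ) / (aᵢ - aⱼ)` are symmetric in
`i, j`, `W` is skew as well, so the product rule turns `Ẋ = W X`, `Ṗ = W P` into `Φ̇ = [W, Φ]`. In
`[W + λB, Φ + λA]` the `λ²`-term vanishes because diagonal matrices commute, and the `λ`-term
because the multipliers are exactly the ones for which `[W, A] = [Φ, B]`.
-/

theorem lie_add_smul_add_smul_eq_lie {R L : Type*} [CommRing R] [LieRing L] [LieAlgebra R L]
    {w φ x y : L} (hwx : ⁅w, x⁆ = ⁅φ, y⁆) (hyx : ⁅y, x⁆ = 0) (c : R) :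
    ⁅w + c • y, φ + c • x⁆ = ⁅w, φ⁆ := by
  have linear_term : ⁅w, x⁆ + ⁅y, φ⁆ = 0 := by
    rw [hwx, ← lie_skew φ y, neg_add_cancel]
  calc ⁅w + c • y, φ + c • x⁆
      = ⁅w, φ⁆ + c • (⁅w, x⁆ + ⁅y, φ⁆) + c • c • ⁅y, x⁆ := by
        simp only [add_lie, lie_add, smul_lie, lie_smul, smul_add]
        abel
    _ = ⁅w, φ⁆ := by simp only [linear_term, hyx, smul_zero, add_zero]

section DividedDifference

variable {n K : Type*} [Field K]

/-- The symmetric matrix of divided differences `(bᵢ - bⱼ) / (aᵢ - aⱼ)`. Manakov's operator `𝔸` is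
the Hadamard product with this matrix. The diagonal entries `0 / 0` are `0` in Lean, which is
immaterial on skew-symmetric matrices. -/
def dividedDifference (a b : n → K) : Matrix n n K :=
  Matrix.of fun i j => (b i - b j) / (a i - a j)

theorem isSymm_dividedDifference (a b : n → K) : (dividedDifference a b).IsSymm := by
  ext i j
  simp only [dividedDifference, transpose_apply, of_apply]
  rw [← neg_sub (b i), ← neg_sub (a i), neg_div_neg_eq]

theorem lie_dividedDifference_hadamard_diagonal [Fintype n] [DecidableEq n] {a : n → K}
    (ha : Function.Injective a) (b : n → K) (ξ : Matrix n n K) :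
    ⁅dividedDifference a b ⊙ ξ, diagonal a⁆ = ⁅ξ, diagonal b⁆ := by
  ext i j
  simp only [Ring.lie_def, Matrix.sub_apply, mul_diagonal, diagonal_mul, hadamard_apply,
    dividedDifference, of_apply]
  obtain rfl | hij := eq_or_ne i j
  · ring
  · have : a i - a j ≠ 0 := sub_ne_zero.mpr (ha.ne hij)
    field_simp
    ring

attribute [local instance] LieRing.ofAssociativeRing

theorem lie_dividedDifference_hadamard_add_smul_diagonal [Fintype n] [DecidableEq n] {a : n → K}
    (ha : Function.Injective a) (b : n → K) (ξ : Matrix n n K) (c : K) :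
    ⁅dividedDifference a b ⊙ ξ + c • diagonal b, ξ + c • diagonal a⁆ =
      ⁅dividedDifference a b ⊙ ξ, ξ⁆ :=
  lie_add_smul_add_smul_eq_lie (lie_dividedDifference_hadamard_diagonal ha b ξ)
    (commute_diagonal b a).lie_eq c

end DividedDifference

theorem transpose_hadamard_eq_neg {n R : Type*} [NonUnitalNonAssocRing R] {S ξ : Matrix n n R}
    (hS : S.IsSymm) (hξ : ξᵀ = -ξ) : (S ⊙ ξ)ᵀ = -(S ⊙ ξ) := by
  rw [transpose_hadamard, hS.eq, hξ]
  ext i j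
  exact mul_neg (S i j) (ξ i j)

/-- The momentum `Φ(X, P) = P Xᵀ - X Pᵀ` of the rotation action `X ↦ g X`, `P ↦ g P` on pairs of
`n × r` matrices; for `r = 1` it is the angular momentum bivector. -/
def angularMomentum {n r R : Type*} [Fintype r] [NonUnitalNonAssocRing R] (X P : Matrix n r R) :
    Matrix n n R :=
  P * Xᵀ - X * Pᵀ

theorem transpose_angularMomentum {n r R : Type*} [Fintype r] [NonUnitalNonAssocCommRing R]
    (X P : Matrix n r R) : (angularMomentum X P)ᵀ = -angularMomentum X P := by
  simp only [angularMomentum, transpose_sub, transpose_mul, transpose_transpose, neg_sub]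

section EntrywiseDerivative

variable {𝕜 l m n R : Type*} [NontriviallyNormedField 𝕜]

/-- The matrix-valued curve `M` has entrywise derivative `M'` at `t`. Working with entries avoids
choosing one of the norms on matrices. -/
def HasEntrywiseDerivAt [NormedAddCommGroup R] [NormedSpace 𝕜 R] (M : 𝕜 → Matrix m n R)
    (M' : Matrix m n R) (t : 𝕜) : Prop :=
  ∀ i j, HasDerivAt (fun s => M s i j) (M' i j) t

namespace HasEntrywiseDerivAt

section Linear

variable [NormedAddCommGroup R] [NormedSpace 𝕜 R] {M N : 𝕜 → Matrix m n R} {M' N' : Matrix m n R}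
  {t : 𝕜}

theorem transpose (hM : HasEntrywiseDerivAt M M' t) :
    HasEntrywiseDerivAt (fun s => (M s)ᵀ) M'ᵀ t :=
  fun i j => hM j i

theorem sub (hM : HasEntrywiseDerivAt M M' t) (hN : HasEntrywiseDerivAt N N' t) :
    HasEntrywiseDerivAt (fun s => M s - N s) (M' - N') t :=
  fun i j => (hM i j).sub (hN i j)

theorem add_const (hM : HasEntrywiseDerivAt M M' t) (C : Matrix m n R) :
    HasEntrywiseDerivAt (fun s => M s + C) M' t :=
  fun i j => (hM i j).add_const (C i j)

end Linear

theorem mul [Fintype m] [NormedRing R] [NormedAlgebra 𝕜 R] {M : 𝕜 → Matrix l m R}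
    {N : 𝕜 → Matrix m n R} {M' : Matrix l m R} {N' : Matrix m n R} {t : 𝕜}
    (hM : HasEntrywiseDerivAt M M' t) (hN : HasEntrywiseDerivAt N N' t) :
    HasEntrywiseDerivAt (fun s => M s * N s) (M' * N t + M t * N') t := by
  intro i j
  simp only [mul_apply, Matrix.add_apply, ← Finset.sum_add_distrib]
  exact HasDerivAt.fun_sum fun k _ => (hM i k).mul (hN k j)

theorem angularMomentum_of_skew {r : Type*} [Fintype n] [Fintype r] [NormedCommRing R]
    [NormedAlgebra 𝕜 R] {X P : 𝕜 → Matrix n r R} {W : Matrix n n R} {t : 𝕜} (hW : Wᵀ = -W)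
    (hX : HasEntrywiseDerivAt X (W * X t) t) (hP : HasEntrywiseDerivAt P (W * P t) t) :
    HasEntrywiseDerivAt (fun s => angularMomentum (X s) (P s))
      ⁅W, angularMomentum (X t) (P t)⁆ t := by
  have product_rule : ⁅W, angularMomentum (X t) (P t)⁆ =
      (W * P t * (X t)ᵀ + P t * (W * X t)ᵀ) - (W * X t * (P t)ᵀ + X t * (W * P t)ᵀ) := by
    simp only [Ring.lie_def, angularMomentum, transpose_mul, hW, Matrix.mul_neg, Matrix.mul_sub,
      Matrix.sub_mul, Matrix.mul_assoc]
    abel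
  rw [product_rule]
  exact (hP.mul hX.transpose).sub (hX.mul hP.transpose)

end HasEntrywiseDerivAt

end EntrywiseDerivative

theorem manakov_lax_pair_general {𝕜 K n r : Type*} [NontriviallyNormedField 𝕜] [NormedField K]
    [NormedAlgebra 𝕜 K] [Fintype n] [DecidableEq n] [Fintype r] {a : n → K}
    (ha : Function.Injective a) (b : n → K) {X P : 𝕜 → Matrix n r K} {Φ : 𝕜 → Matrix n n K}
    (hΦ : ∀ s, Φ s = angularMomentum (X s) (P s)) {t : 𝕜}
    (hX : HasEntrywiseDerivAt X ((dividedDifference a b ⊙ Φ t) * X t) t)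
    (hP : HasEntrywiseDerivAt P ((dividedDifference a b ⊙ Φ t) * P t) t) (c : K) :
    HasEntrywiseDerivAt (fun s => Φ s + c • diagonal a)
      ⁅dividedDifference a b ⊙ Φ t + c • diagonal b, Φ t + c • diagonal a⁆ t := by
  simp only [hΦ] at hX hP ⊢
  have skew := transpose_hadamard_eq_neg (isSymm_dividedDifference a b)
    (transpose_angularMomentum (X t) (P t))
  rw [lie_dividedDifference_hadamard_add_smul_diagonal ha b]
  exact (hX.angularMomentum_of_skew skew hP).add_const (c • diagonal a)

/-- The Manakov-type submersion geodesic flow on the Stiefel variety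
implies the matrix Lax equation d/dt (Φ + λA) = [𝔸(Φ) + λB, Φ + λA]. -/
theorem manakov_lax_pair {n r : ℕ} (a b : Fin n → ℝ) (ha : Function.Injective a)
    (A B : Matrix (Fin n) (Fin n) ℝ)
    (hA : A = Matrix.diagonal a) (hB : B = Matrix.diagonal b)
    (𝔸 : Matrix (Fin n) (Fin n) ℝ → Matrix (Fin n) (Fin n) ℝ)
    (h𝔸 : ∀ ξ i j, 𝔸 ξ i j = ((b i - b j) / (a i - a j)) * ξ i j)
    (X P : ℝ → Matrix (Fin n) (Fin r) ℝ)
    (Φ : ℝ → Matrix (Fin n) (Fin n) ℝ)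
    (hΦ : ∀ t, Φ t = P t * (X t)ᵀ - X t * (P t)ᵀ)
    (hX : ∀ t i j, HasDerivAt (fun s => X s i j) ((𝔸 (Φ t) * X t) i j) t)
    (hP : ∀ t i j, HasDerivAt (fun s => P s i j) ((𝔸 (Φ t) * P t) i j) t) :
    ∀ (lam : ℝ) (t : ℝ) (i j : Fin n),
      HasDerivAt (fun s => (Φ s + lam • A) i j)
        (((𝔸 (Φ t) + lam • B) * (Φ t + lam • A)
          - (Φ t + lam • A) * (𝔸 (Φ t) + lam • B)) i j) t := by
  subst hA hB
  have h𝔸_eq (ξ : Matrix (Fin n) (Fin n) ℝ) : 𝔸 ξ = dividedDifference a b ⊙ ξ := Matrix.ext (h𝔸 ξ)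
  simp only [h𝔸_eq] at hX hP ⊢
  exact fun lam t => manakov_lax_pair_general ha b hΦ (hX t) (hP t) lam
end

section
/- Let X(t), P(t) be differentiable curves of n×r real matrices that for all t satisfy the Stiefel constraints XᵀX = I_r and XᵀP + PᵀX = 0, and satisfy the Neumann equations with parameter κ: Ẋ = P − (1+2κ)XPᵀX, Ṗ = −AX − XPᵀP + (1+2κ)PXᵀP + XXᵀAX. Then, independently of κ, d/dt Φ = [XXᵀ, A] and d/dt (XXᵀ) = [Φ, XXᵀ], where Φ = PXᵀ − XPᵀ. -/
open Matrix

/-!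
Differentiating `P Xᵀ` along the Neumann flow, the two terms carrying `κ` cancel and what is left
is a symmetric matrix minus `A X Xᵀ`. As `Φ` is `P Xᵀ` minus its transpose, only the commutator
`[X Xᵀ, A]` survives. For the projection `X Xᵀ`, the Stiefel constraints turn both its derivative
and `[Φ, X Xᵀ]` into `P Xᵀ + X Pᵀ`, the `κ`-terms being multiples of `X (Xᵀ P + Pᵀ X) Xᵀ`.
-/

section Derivative

variable {𝕜 E 𝔸 m n r : Type*} [NontriviallyNormedField 𝕜] {t : 𝕜}
  [NormedAddCommGroup E] [NormedSpace 𝕜 E] [NormedRing 𝔸] [NormedAlgebra 𝕜 𝔸]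

theorem hasDerivAt_matrix_iff [Finite m] [Finite n] {M : 𝕜 → Matrix m n E} {M' : Matrix m n E} :
    HasDerivAt M M' t ↔ ∀ i j, HasDerivAt (fun s => M s i j) (M' i j) t := by
  have := Fintype.ofFinite m
  have := Fintype.ofFinite n
  exact hasDerivAt_pi.trans (forall_congr' fun _ => hasDerivAt_pi)

theorem hasDerivAt_matrix_transpose [Finite m] [Finite n] {M : 𝕜 → Matrix m n E}
    {M' : Matrix m n E} (hM : HasDerivAt M M' t) : HasDerivAt (fun s => (M s)ᵀ) M'ᵀ t :=
  hasDerivAt_matrix_iff.2 fun i j => hasDerivAt_matrix_iff.1 hM j i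

theorem hasDerivAt_matrix_sub [Finite m] [Finite n] {M N : 𝕜 → Matrix m n E}
    {M' N' : Matrix m n E} (hM : HasDerivAt M M' t) (hN : HasDerivAt N N' t) :
    HasDerivAt (fun s => M s - N s) (M' - N') t :=
  hasDerivAt_matrix_iff.2 fun i j =>
    (hasDerivAt_matrix_iff.1 hM i j).sub (hasDerivAt_matrix_iff.1 hN i j)

theorem hasDerivAt_matrix_mul [Finite m] [Fintype r] [Finite n] {M : 𝕜 → Matrix m r 𝔸}
    {N : 𝕜 → Matrix r n 𝔸} {M' : Matrix m r 𝔸} {N' : Matrix r n 𝔸}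
    (hM : HasDerivAt M M' t) (hN : HasDerivAt N N' t) :
    HasDerivAt (fun s => M s * N s) (M' * N t + M t * N') t := by
  rw [hasDerivAt_matrix_iff] at hM hN ⊢
  intro i j
  simp only [mul_apply, Matrix.add_apply, ← Finset.sum_add_distrib]
  exact .fun_sum fun k _ => (hM i k).mul (hN k j)

theorem hasDerivAt_matrix_mul_transpose [Finite m] [Fintype r] [Finite n] {M : 𝕜 → Matrix m r 𝔸}
    {N : 𝕜 → Matrix n r 𝔸} {M' : Matrix m r 𝔸} {N' : Matrix n r 𝔸}
    (hM : HasDerivAt M M' t) (hN : HasDerivAt N N' t) :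
    HasDerivAt (fun s => M s * (N s)ᵀ) (M' * (N t)ᵀ + M t * N'ᵀ) t :=
  hasDerivAt_matrix_mul hM (hasDerivAt_matrix_transpose hN)

end Derivative

section Neumann

variable {R n r : Type*} [CommRing R] [Fintype r]

/-- The momentum map `Φ(X, P) = P Xᵀ - X Pᵀ` of the rotation action on the cotangent bundle of the
Stiefel variety, defined for arbitrary pairs of matrices. -/
def stiefelMomentum (X P : Matrix n r R) : Matrix n n R :=
  P * Xᵀ - X * Pᵀ

theorem stiefelMomentum_eq_sub_transpose (X P : Matrix n r R) :
    stiefelMomentum X P = P * Xᵀ - (P * Xᵀ)ᵀ := by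
  rw [stiefelMomentum, transpose_mul, transpose_transpose]

variable [Fintype n]

/-- The right-hand side of the Neumann equation for `Ẋ`. -/
def neumannVelocity (κ : R) (X P : Matrix n r R) : Matrix n r R :=
  P - (1 + 2 * κ) • (X * Pᵀ * X)

/-- The right-hand side of the Neumann equation for `Ṗ`, with potential matrix `A`. -/
def neumannForce (A : Matrix n n R) (κ : R) (X P : Matrix n r R) : Matrix n r R :=
  -(A * X) - X * Pᵀ * P + (1 + 2 * κ) • (P * Xᵀ * P) + X * Xᵀ * A * X

theorem neumannForce_mul_transpose_add (A : Matrix n n R) (κ : R) (X P : Matrix n r R) :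
    neumannForce A κ X P * Xᵀ + P * (neumannVelocity κ X P)ᵀ =
      P * Pᵀ - X * Pᵀ * P * Xᵀ + X * Xᵀ * A * (X * Xᵀ) - A * (X * Xᵀ) := by
  simp only [neumannForce, neumannVelocity, transpose_sub, transpose_smul, transpose_mul,
    transpose_transpose, Matrix.add_mul, Matrix.sub_mul, Matrix.neg_mul, Matrix.smul_mul,
    Matrix.mul_sub, Matrix.mul_smul, Matrix.mul_assoc]
  abel

theorem neumannForce_mul_transpose_add_sub_transpose {A : Matrix n n R} (hA : A.IsSymm) (κ : R)
    (X P : Matrix n r R) :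
    neumannForce A κ X P * Xᵀ + P * (neumannVelocity κ X P)ᵀ -
      (neumannForce A κ X P * Xᵀ + P * (neumannVelocity κ X P)ᵀ)ᵀ = ⁅X * Xᵀ, A⁆ := by
  have symm_part : (P * Pᵀ - X * Pᵀ * P * Xᵀ + X * Xᵀ * A * (X * Xᵀ)).IsSymm := by
    simp only [IsSymm, transpose_add, transpose_sub, transpose_mul, transpose_transpose, hA.eq,
      Matrix.mul_assoc]
  rw [neumannForce_mul_transpose_add, transpose_sub, symm_part.eq, transpose_mul, hA.eq,
    transpose_mul, transpose_transpose, Ring.lie_def, sub_sub_sub_cancel_left]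

theorem neumannVelocity_mul_transpose_add {X P : Matrix n r R} (κ : R)
    (hXP : Xᵀ * P + Pᵀ * X = 0) :
    neumannVelocity κ X P * Xᵀ + X * (neumannVelocity κ X P)ᵀ = P * Xᵀ + X * Pᵀ := by
  calc neumannVelocity κ X P * Xᵀ + X * (neumannVelocity κ X P)ᵀ
      = P * Xᵀ + X * Pᵀ - (1 + 2 * κ) • (X * (Xᵀ * P + Pᵀ * X) * Xᵀ) := by
        simp only [neumannVelocity, transpose_sub, transpose_smul, transpose_mul,
          transpose_transpose, Matrix.sub_mul, Matrix.mul_sub, Matrix.smul_mul, Matrix.mul_smul,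
          Matrix.mul_add, Matrix.add_mul, Matrix.mul_assoc, smul_add]
        abel
    _ = P * Xᵀ + X * Pᵀ := by
        rw [hXP, Matrix.mul_zero, Matrix.zero_mul, smul_zero, sub_zero]

theorem lie_stiefelMomentum_mul_transpose [DecidableEq r] {X P : Matrix n r R}
    (hX : Xᵀ * X = 1) (hXP : Xᵀ * P + Pᵀ * X = 0) :
    ⁅stiefelMomentum X P, X * Xᵀ⁆ = P * Xᵀ + X * Pᵀ := by
  calc ⁅stiefelMomentum X P, X * Xᵀ⁆
      = P * (Xᵀ * X) * Xᵀ + X * (Xᵀ * X) * Pᵀ - X * (Xᵀ * P + Pᵀ * X) * Xᵀ := by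
        simp only [Ring.lie_def, stiefelMomentum, Matrix.sub_mul, Matrix.mul_sub, Matrix.mul_add,
          Matrix.add_mul, Matrix.mul_assoc]
        abel
    _ = P * Xᵀ + X * Pᵀ := by
        rw [hX, hXP, Matrix.mul_one, Matrix.mul_one, Matrix.mul_zero, Matrix.zero_mul, sub_zero]

end Neumann

section Flow

variable {𝕜 n r : Type*} [NontriviallyNormedField 𝕜] [Fintype n] [Fintype r]
  {A : Matrix n n 𝕜} {κ t : 𝕜} {X P : 𝕜 → Matrix n r 𝕜}

theorem hasDerivAt_stiefelMomentum_of_neumann (hA : A.IsSymm)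
    (hX : HasDerivAt X (neumannVelocity κ (X t) (P t)) t)
    (hP : HasDerivAt P (neumannForce A κ (X t) (P t)) t) :
    HasDerivAt (fun s => stiefelMomentum (X s) (P s)) ⁅X t * (X t)ᵀ, A⁆ t := by
  have hPX := hasDerivAt_matrix_mul_transpose hP hX
  simp only [stiefelMomentum_eq_sub_transpose]
  rw [← neumannForce_mul_transpose_add_sub_transpose hA κ]
  exact hasDerivAt_matrix_sub hPX (hasDerivAt_matrix_transpose hPX)

theorem hasDerivAt_mul_transpose_of_neumann [DecidableEq r]
    (hXX : (X t)ᵀ * X t = 1) (hXP : (X t)ᵀ * P t + (P t)ᵀ * X t = 0)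
    (hX : HasDerivAt X (neumannVelocity κ (X t) (P t)) t) :
    HasDerivAt (fun s => X s * (X s)ᵀ) ⁅stiefelMomentum (X t) (P t), X t * (X t)ᵀ⁆ t := by
  rw [lie_stiefelMomentum_mul_transpose hXX hXP, ← neumannVelocity_mul_transpose_add κ hXP]
  exact hasDerivAt_matrix_mul_transpose hX hX

theorem neumann_momentum_equations_general [DecidableEq r] (hA : A.IsSymm)
    (hXX : (X t)ᵀ * X t = 1) (hXP : (X t)ᵀ * P t + (P t)ᵀ * X t = 0)
    (hX : HasDerivAt X (neumannVelocity κ (X t) (P t)) t)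
    (hP : HasDerivAt P (neumannForce A κ (X t) (P t)) t) :
    HasDerivAt (fun s => stiefelMomentum (X s) (P s)) ⁅X t * (X t)ᵀ, A⁆ t ∧
      HasDerivAt (fun s => X s * (X s)ᵀ) ⁅stiefelMomentum (X t) (P t), X t * (X t)ᵀ⁆ t :=
  ⟨hasDerivAt_stiefelMomentum_of_neumann hA hX hP, hasDerivAt_mul_transpose_of_neumann hXX hXP hX⟩

end Flow

/-- Along the Neumann flow with parameter κ on the Stiefel variety,
d/dt Φ = [XXᵀ, A] and d/dt (XXᵀ) = [Φ, XXᵀ], where Φ = PXᵀ − XPᵀ. -/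
theorem neumann_momentum_equations {n r : ℕ} (a : Fin n → ℝ)
    (A : Matrix (Fin n) (Fin n) ℝ) (hA : A = Matrix.diagonal a)
    (κ : ℝ) (X P : ℝ → Matrix (Fin n) (Fin r) ℝ)
    (hc1 : ∀ t, (X t)ᵀ * X t = 1)
    (hc2 : ∀ t, (X t)ᵀ * P t + (P t)ᵀ * X t = 0)
    (hX : ∀ t i j, HasDerivAt (fun s => X s i j)
      ((P t - (1 + 2 * κ) • (X t * (P t)ᵀ * X t)) i j) t)
    (hP : ∀ t i j, HasDerivAt (fun s => P s i j)
      ((-(A * X t) - X t * (P t)ᵀ * P t + (1 + 2 * κ) • (P t * (X t)ᵀ * P t)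
        + X t * (X t)ᵀ * A * X t) i j) t)
    (Φ : ℝ → Matrix (Fin n) (Fin n) ℝ)
    (hΦ : ∀ t, Φ t = P t * (X t)ᵀ - X t * (P t)ᵀ) :
    (∀ t i j, HasDerivAt (fun s => Φ s i j)
      ((X t * (X t)ᵀ * A - A * (X t * (X t)ᵀ)) i j) t) ∧
    (∀ t i j, HasDerivAt (fun s => (X s * (X s)ᵀ) i j)
      ((Φ t * (X t * (X t)ᵀ) - X t * (X t)ᵀ * Φ t) i j) t) := by
  obtain rfl : Φ = fun t => stiefelMomentum (X t) (P t) := funext hΦ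
  have flow t := neumann_momentum_equations_general (hA ▸ isSymm_diagonal a) (hc1 t) (hc2 t)
    (hasDerivAt_matrix_iff.2 (hX t)) (hasDerivAt_matrix_iff.2 (hP t))
  exact ⟨fun t => hasDerivAt_matrix_iff.1 (flow t).1, fun t => hasDerivAt_matrix_iff.1 (flow t).2⟩
end

section
/- Let X, P be n×r real matrices satisfying the Stiefel constraints XᵀX = I_r and XᵀP + PᵀX = 0, and set V = P − XPᵀX. Then P = V − (1/2)·XXᵀV. (Thus the relation Ẋ = Φ·X = P − XPᵀX between velocities and momenta for the normal metric can be uniquely inverted as P = Ẋ − (1/2)XXᵀẊ.) -/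
open Matrix

/-!
The second constraint turns `V = P - X Pᵀ X` into `V = (1 + X Xᵀ) P`. By the first constraint
`E = X Xᵀ` is idempotent, and `1 + E` is inverted by `1 - ½ E` for every idempotent `E`.
-/

section Idempotent

variable {R A : Type*} [Semiring R] [Invertible (2 : R)] [Ring A] [Module R A] [IsScalarTower R A A]

theorem one_sub_invOf_two_smul_mul_one_add_of_isIdempotentElem {e : A}
    (he : IsIdempotentElem e) : (1 - ⅟(2 : R) • e) * (1 + e) = 1 := by
  have half_double : ⅟(2 : R) • (e + e) = e := by
    rw [← two_smul R e, invOf_smul_smul]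
  calc (1 - ⅟(2 : R) • e) * (1 + e)
      = 1 + e - ⅟(2 : R) • (e + e * e) := by
        rw [sub_mul, one_mul, smul_mul_assoc, mul_add, mul_one]
    _ = 1 := by rw [he.eq, half_double, add_sub_cancel_right]

end Idempotent

section RectangularMatrix

variable {m n R : Type*} [Fintype m] [Fintype n]

theorem isIdempotentElem_mul_of_mul_eq_one [DecidableEq n] [Semiring R] {X : Matrix m n R}
    {Y : Matrix n m R} (hYX : Y * X = 1) : IsIdempotentElem (X * Y) :=
  calc X * Y * (X * Y) = X * (Y * X) * Y := by simp only [Matrix.mul_assoc]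
    _ = X * Y := by rw [hYX, Matrix.mul_one]

variable [Ring R]

theorem sub_mul_mul_eq_one_add_mul_mul [DecidableEq m] {X P : Matrix m n R} {Y Q : Matrix n m R}
    (h : Y * P + Q * X = 0) : P - X * Q * X = (1 + X * Y) * P := by
  have hQX : Q * X = -(Y * P) := eq_neg_of_add_eq_zero_right h
  rw [Matrix.mul_assoc, hQX, Matrix.mul_neg, sub_neg_eq_add, Matrix.add_mul, Matrix.one_mul,
    Matrix.mul_assoc]

-- Besides `Y = Xᵀ`, `Q = Pᵀ`, the choice `Y = Xᴴ`, `Q = Pᴴ` gives the complex Stiefel manifold.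
theorem stiefel_normal_metric_legendre_inverse_general [DecidableEq n] [Invertible (2 : R)]
    (X P V : Matrix m n R) (Y Q : Matrix n m R)
    (hYX : Y * X = 1) (hYP : Y * P + Q * X = 0) (hV : V = P - X * Q * X) :
    P = V - ⅟(2 : R) • (X * Y * V) := by
  classical
  have velocity : V = (1 + X * Y) * P := hV.trans (sub_mul_mul_eq_one_add_mul_mul hYP)
  have inverse : (1 - ⅟(2 : R) • (X * Y)) * (1 + X * Y) = 1 :=
    one_sub_invOf_two_smul_mul_one_add_of_isIdempotentElem
      (isIdempotentElem_mul_of_mul_eq_one hYX)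
  calc P = (1 - ⅟(2 : R) • (X * Y)) * V := by
        rw [velocity, ← Matrix.mul_assoc, inverse, Matrix.one_mul]
    _ = V - ⅟(2 : R) • (X * Y * V) := by
        rw [Matrix.sub_mul, Matrix.one_mul, Matrix.smul_mul]

end RectangularMatrix

/-- On the cotangent bundle of the Stiefel variety, the relation
V = P − XPᵀX is inverted by P = V − (1/2)XXᵀV. -/
theorem stiefel_normal_metric_legendre_inverse {n r : ℕ}
    (X P V : Matrix (Fin n) (Fin r) ℝ)
    (hc1 : Xᵀ * X = 1) (hc2 : Xᵀ * P + Pᵀ * X = 0)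
    (hV : V = P - X * Pᵀ * X) :
    P = V - (1 / 2 : ℝ) • (X * Xᵀ * V) := by
  simpa only [invOf_eq_inv, one_div] using
    stiefel_normal_metric_legendre_inverse_general X P V Xᵀ Pᵀ hc1 hc2 hV
end

section
/- Let A be a symmetric n×n real matrix, let e(t) ∈ ℝⁿ and Ω(t) ∈ M_n(ℝ) be differentiable curves with Ω(t) skew-symmetric and (e(t), e(t)) = 1 for all t, satisfying the reduced Neumann equations ė = Ωe and Ω̇ = [A, e⊗e] (i.e. Ω̇ = A(e eᵀ) − (e eᵀ)A). Then the second derivative of e satisfies ë = Ae − ((e, Ae) + (ė, ė))·e + F_Ω·ė, where F_Ω = Ω − (ė eᵀ − e ėᵀ); i.e. the reduced system is the Neumann system on the sphere S^{n−1} perturbed by the Yang–Mills force F_Ω ė. -/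
open Matrix

/-!
On the unit sphere the commutator `[A, e ⊗ e]` sends `e` to `Ae - (e, Ae) e`, so the product rule
applied to `ė = Ωe` gives `ë = Ae - (e, Ae) e + Ωė`. Differentiating `(e, e) = 1` yields
`(e, ė) = 0`, hence `ė ∧ e` sends `ė` to `-(ė, ė) e`; subtracting and adding this vector exhibits
the constraint force `-(ė, ė) e` and turns `Ωė` into the Yang–Mills force `(Ω - ė ∧ e) ė`.
-/

section Algebra

variable {R ι : Type*} [CommRing R]

/-- The momentum matrix `v ∧ w = v wᵀ - w vᵀ` of a point `w` with velocity `v`; the velocity comes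
first, as in `ė ∧ e`. -/
def wedge (v w : ι → R) : Matrix ι ι R :=
  vecMulVec v w - vecMulVec w v

variable [Fintype ι]

theorem wedge_mulVec (v w x : ι → R) :
    wedge v w *ᵥ x = (w ⬝ᵥ x) • v - (v ⬝ᵥ x) • w := by
  simp only [wedge, sub_mulVec, vecMulVec_mulVec, op_smul_eq_smul]

theorem lie_vecMulVec_self_mulVec_self (A : Matrix ι ι R) (v : ι → R) :
    ⁅A, vecMulVec v v⁆ *ᵥ v = (v ⬝ᵥ v) • A *ᵥ v - (v ⬝ᵥ A *ᵥ v) • v := by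
  simp only [Ring.lie_def, sub_mulVec, ← mulVec_mulVec, vecMulVec_mulVec, op_smul_eq_smul,
    mulVec_smul]

theorem lie_mulVec_add_mulVec_mulVec_eq_neumann_add_yangMills (A Ω : Matrix ι ι R) {v : ι → R}
    (hunit : v ⬝ᵥ v = 1) (htangent : v ⬝ᵥ Ω *ᵥ v = 0) :
    ⁅A, vecMulVec v v⁆ *ᵥ v + Ω *ᵥ Ω *ᵥ v =
      A *ᵥ v - (v ⬝ᵥ A *ᵥ v + Ω *ᵥ v ⬝ᵥ Ω *ᵥ v) • v
        + (Ω - wedge (Ω *ᵥ v) v) *ᵥ Ω *ᵥ v := by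
  rw [lie_vecMulVec_self_mulVec_self, sub_mulVec, wedge_mulVec, hunit, htangent]
  module

end Algebra

section Calculus

open scoped Topology

variable {𝕜 𝔸 ι : Type*} [NontriviallyNormedField 𝕜] [Fintype ι]

theorem hasDerivAt_dotProduct [NormedRing 𝔸] [NormedAlgebra 𝕜 𝔸]
    {u v : 𝕜 → ι → 𝔸} {u' v' : ι → 𝔸} {t : 𝕜}
    (hu : ∀ i, HasDerivAt (fun s => u s i) (u' i) t)
    (hv : ∀ i, HasDerivAt (fun s => v s i) (v' i) t) :
    HasDerivAt (fun s => u s ⬝ᵥ v s) (u' ⬝ᵥ v t + u t ⬝ᵥ v') t := by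
  simp only [dotProduct, ← Finset.sum_add_distrib]
  exact HasDerivAt.fun_sum fun i _ => (hu i).mul (hv i)

variable [NormedCommRing 𝔸] [NormedAlgebra 𝕜 𝔸] [NeZero (2 : 𝕜)]

theorem dotProduct_eq_zero_of_eventually_dotProduct_self_eq
    {v : 𝕜 → ι → 𝔸} {v' : ι → 𝔸} {t : 𝕜} {c : 𝔸}
    (hv : ∀ i, HasDerivAt (fun s => v s i) (v' i) t) (hc : ∀ᶠ s in 𝓝 t, v s ⬝ᵥ v s = c) :
    v t ⬝ᵥ v' = 0 := by
  have hderiv : v' ⬝ᵥ v t + v t ⬝ᵥ v' = 0 :=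
    (hasDerivAt_dotProduct hv hv).unique ((hasDerivAt_const t c).congr_of_eventuallyEq hc)
  rw [dotProduct_comm v', ← two_smul 𝕜] at hderiv
  exact (smul_eq_zero.mp hderiv).resolve_left two_ne_zero

theorem reduced_neumann_yang_mills_general (A : Matrix ι ι 𝔸) {e : 𝕜 → ι → 𝔸}
    {Ω : 𝕜 → Matrix ι ι 𝔸} {t : 𝕜} (hsphere : ∀ᶠ s in 𝓝 t, e s ⬝ᵥ e s = 1)
    (he : ∀ i, HasDerivAt (fun s => e s i) ((Ω t *ᵥ e t) i) t)
    (hΩ : ∀ i j, HasDerivAt (fun s => Ω s i j) (⁅A, vecMulVec (e t) (e t)⁆ i j) t) (i : ι) :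
    HasDerivAt (fun s => (Ω s *ᵥ e s) i)
      ((A *ᵥ e t - (e t ⬝ᵥ A *ᵥ e t + Ω t *ᵥ e t ⬝ᵥ Ω t *ᵥ e t) • e t
        + (Ω t - wedge (Ω t *ᵥ e t) (e t)) *ᵥ Ω t *ᵥ e t) i) t := by
  have htangent : e t ⬝ᵥ Ω t *ᵥ e t = 0 :=
    dotProduct_eq_zero_of_eventually_dotProduct_self_eq he hsphere
  rw [← lie_mulVec_add_mulVec_mulVec_eq_neumann_add_yangMills A (Ω t) hsphere.self_of_nhds htangent]
  exact hasDerivAt_dotProduct (hΩ i) he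

end Calculus

/-- The reduced Neumann system ė = Ωe, Ω̇ = [A, e⊗e] on so(n) × S^{n−1}
yields ë = Ae − ((e,Ae) + (ė,ė))e + F_Ω ė, where F_Ω = Ω − (ė∧e) = Ω − (ėeᵀ − eėᵀ). -/
theorem reduced_neumann_yang_mills {n : ℕ}
    (A : Matrix (Fin n) (Fin n) ℝ) (hAsym : Aᵀ = A)
    (e : ℝ → Fin n → ℝ) (Ω : ℝ → Matrix (Fin n) (Fin n) ℝ)
    (hskew : ∀ t, (Ω t)ᵀ = -Ω t)
    (hsphere : ∀ t, e t ⬝ᵥ e t = 1)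
    (he : ∀ t i, HasDerivAt (fun s => e s i) ((Ω t *ᵥ e t) i) t)
    (hΩ : ∀ t i j, HasDerivAt (fun s => Ω s i j)
      ((A * Matrix.vecMulVec (e t) (e t) - Matrix.vecMulVec (e t) (e t) * A) i j) t) :
    ∀ t i, HasDerivAt (fun s => (Ω s *ᵥ e s) i)
      ((A *ᵥ e t
        - ((e t ⬝ᵥ (A *ᵥ e t)) + ((Ω t *ᵥ e t) ⬝ᵥ (Ω t *ᵥ e t))) • e t
        + (Ω t - (Matrix.vecMulVec (Ω t *ᵥ e t) (e t)
            - Matrix.vecMulVec (e t) (Ω t *ᵥ e t))) *ᵥ (Ω t *ᵥ e t)) i) t := by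
  intro t i
  exact reduced_neumann_yang_mills_general A (.of_forall hsphere) (he t) (hΩ t) i
end

section
/- Let A = diag(a₁,…,aₙ) be a real diagonal n×n matrix and let Z(t) be a twice differentiable curve of n×r complex matrices satisfying the constraint Z̄ᵀZ = I_r for all t and the Neumann equation on the complex Stiefel variety: Z̈ = −AZ + ZΛ, where Λ = Z̄ᵀAZ − Ż̄ᵀŻ (bar denotes entrywise complex conjugation). Then the r×r complex matrix ψ₀ = ZᵀŻ̄ − ŻᵀZ̄ is conserved: d/dt (ZᵀŻ̄ − ŻᵀZ̄) = 0 for all t. -/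
open Matrix

/-!
The momentum `μ(Z, V) = Vᴴ Z - Zᴴ V`, whose transpose is `ψ₀`, is real-bilinear and vanishes
exactly when `Zᴴ V` is Hermitian. In particular `μ(V, V) = 0`, so along a curve the derivative of
`μ(Z, Ż)` is `μ(Z, Z̈)`. For the Neumann equation `Zᴴ Z̈ = -Zᴴ A Z + Zᴴ Z Λ`, where the first term
is Hermitian because `A` is, and the second equals `Λ` on the Stiefel variety, which is Hermitian
as well.
-/

section Algebra

variable {m p R : Type*} [Fintype m]

/-- The momentum of the right unitary action at position `Z` and velocity `V`. With `ψ₀` written as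
`Zᵀ V̄ - Vᵀ Z̄`, this is its transpose; unlike `ψ₀` it does not need commuting scalars, so it also
makes sense on quaternionic Stiefel varieties. -/
def unitaryMomentum [NonUnitalRing R] [StarRing R] (Z V : Matrix m p R) : Matrix p p R :=
  Vᴴ * Z - Zᴴ * V

theorem unitaryMomentum_eq_zero_iff [NonUnitalRing R] [StarRing R] {Z V : Matrix m p R} :
    unitaryMomentum Z V = 0 ↔ (Zᴴ * V).IsHermitian := by
  rw [unitaryMomentum, sub_eq_zero, IsHermitian, conjTranspose_mul, conjTranspose_conjTranspose]

theorem transpose_mul_map_conj_sub_eq_unitaryMomentum_transpose [CommRing R] [StarRing R]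
    (Z V : Matrix m p R) :
    Zᵀ * V.map (starRingEnd R) - Vᵀ * Z.map (starRingEnd R) = (unitaryMomentum Z V)ᵀ := by
  rw [unitaryMomentum, transpose_sub, transpose_mul, transpose_mul]
  rfl

theorem isHermitian_conjTranspose_mul_neumann_force [Fintype p] [NonUnitalRing R] [StarRing R]
    {A : Matrix m m R} {Z : Matrix m p R} {Lam : Matrix p p R} (hA : A.IsHermitian)
    (hLam : (Zᴴ * Z * Lam).IsHermitian) : (Zᴴ * (-(A * Z) + Z * Lam)).IsHermitian := by
  rw [Matrix.mul_add, Matrix.mul_neg, ← Matrix.mul_assoc, ← Matrix.mul_assoc]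
  exact (isHermitian_conjTranspose_mul_mul Z hA).neg.add hLam

end Algebra

section Calculus

variable {m p q 𝕜 R : Type*} [Fintype m] [NontriviallyNormedField 𝕜] [StarRing 𝕜] [TrivialStar 𝕜]
  [NormedRing R] [StarRing R] [ContinuousStar R] [NormedAlgebra 𝕜 R] [StarModule 𝕜 R]

theorem hasDerivAt_conjTranspose_mul_apply {Y : 𝕜 → Matrix m p R} {Y' : Matrix m p R}
    {Z : 𝕜 → Matrix m q R} {Z' : Matrix m q R} {t : 𝕜} {i : p} {j : q}
    (hY : ∀ k, HasDerivAt (fun s => Y s k i) (Y' k i) t)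
    (hZ : ∀ k, HasDerivAt (fun s => Z s k j) (Z' k j) t) :
    HasDerivAt (fun s => ((Y s)ᴴ * Z s) i j) ((Y'ᴴ * Z t + (Y t)ᴴ * Z') i j) t := by
  simp only [Matrix.add_apply, mul_apply, conjTranspose_apply, ← Finset.sum_add_distrib]
  exact HasDerivAt.fun_sum fun k _ => (hY k).star.mul (hZ k)

theorem hasDerivAt_unitaryMomentum_apply {Z V : 𝕜 → Matrix m p R} {W : Matrix m p R} {t : 𝕜}
    (hZ : ∀ k i, HasDerivAt (fun s => Z s k i) (V t k i) t)
    (hV : ∀ k i, HasDerivAt (fun s => V s k i) (W k i) t) (i j : p) :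
    HasDerivAt (fun s => unitaryMomentum (Z s) (V s) i j) (unitaryMomentum (Z t) W i j) t := by
  have momentum_eq_sub : unitaryMomentum (Z t) W =
      (Wᴴ * Z t + (V t)ᴴ * V t) - ((V t)ᴴ * V t + (Z t)ᴴ * W) := by
    rw [unitaryMomentum]
    abel
  rw [momentum_eq_sub]
  exact (hasDerivAt_conjTranspose_mul_apply (hV · i) (hZ · j)).sub
    (hasDerivAt_conjTranspose_mul_apply (hZ · i) (hV · j))

theorem complex_neumann_momentum_conserved_general [Fintype p] {A : 𝕜 → Matrix m m R}
    {Z Z' : 𝕜 → Matrix m p R} {Lam : 𝕜 → Matrix p p R} (hA : ∀ t, (A t).IsHermitian)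
    (hLam : ∀ t, ((Z t)ᴴ * Z t * Lam t).IsHermitian)
    (hZ' : ∀ t i j, HasDerivAt (fun s => Z s i j) (Z' t i j) t)
    (hZ'' : ∀ t i j, HasDerivAt (fun s => Z' s i j) ((-(A t * Z t) + Z t * Lam t) i j) t)
    (t : 𝕜) (i j : p) :
    HasDerivAt (fun s => unitaryMomentum (Z s) (Z' s) i j) 0 t := by
  have torque_eq_zero : unitaryMomentum (Z t) (-(A t * Z t) + Z t * Lam t) = 0 :=
    unitaryMomentum_eq_zero_iff.2 (isHermitian_conjTranspose_mul_neumann_force (hA t) (hLam t))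
  simpa only [torque_eq_zero, Matrix.zero_apply] using
    hasDerivAt_unitaryMomentum_apply (hZ' t) (hZ'' t) i j

end Calculus

/-- For the Neumann system on the complex Stiefel variety, the U(r)-momentum
ψ₀ = ZᵀŻ̄ − ŻᵀZ̄ is conserved. -/
theorem complex_neumann_momentum_conserved {n r : ℕ} (a : Fin n → ℝ)
    (A : Matrix (Fin n) (Fin n) ℂ) (hA : A = Matrix.diagonal (fun i => (a i : ℂ)))
    (Z Z' : ℝ → Matrix (Fin n) (Fin r) ℂ)
    (hconstr : ∀ t, (Z t)ᴴ * Z t = 1)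
    (hZ' : ∀ t i j, HasDerivAt (fun s => Z s i j) (Z' t i j) t)
    (Lam : ℝ → Matrix (Fin r) (Fin r) ℂ)
    (hLam : ∀ t, Lam t = (Z t)ᴴ * A * Z t - (Z' t)ᴴ * Z' t)
    (hZ'' : ∀ t i j, HasDerivAt (fun s => Z' s i j)
      ((-(A * Z t) + Z t * Lam t) i j) t) :
    ∀ t i j, HasDerivAt
      (fun s => ((Z s)ᵀ * (Z' s).map (starRingEnd ℂ)
        - (Z' s)ᵀ * (Z s).map (starRingEnd ℂ)) i j) 0 t := by
  intro t i j
  have A_isHermitian : A.IsHermitian :=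
    hA ▸ isHermitian_diagonal_iff.2 fun k => Complex.conj_ofReal (a k)
  have multiplier_isHermitian (s : ℝ) : ((Z s)ᴴ * Z s * Lam s).IsHermitian := by
    rw [hconstr, Matrix.one_mul, hLam]
    exact (isHermitian_conjTranspose_mul_mul _ A_isHermitian).sub
      (isHermitian_conjTranspose_mul_self _)
  simp only [transpose_mul_map_conj_sub_eq_unitaryMomentum_transpose, transpose_apply]
  exact complex_neumann_momentum_conserved_general (fun _ => A_isHermitian)
    multiplier_isHermitian hZ' hZ'' t j i
end

section
/- Let B = diag(b₁,…,b_m) be a real diagonal m×m matrix with all b_i ≠ 0, and let V be an m×k real matrix of rank k (so its columns span a k-dimensional plane π through the origin of ℝᵐ). Then π is tangent to the nondegenerate cone {x ∈ ℝᵐ : xᵀBx = 0} — i.e. there exists a nonzero vector v in the column space of V with vᵀBw = 0 for every w in the column space of V — if and only if the Plücker coordinates G_I of π (the k×k minors of V indexed by k-element subsets I ⊆ {1,…,m} of rows) satisfy Σ_I (∏_{i∈I} b_i)·G_I² = 0. -/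
open Matrix

/-!
The bilinear form of `B`, restricted to the column space of `V` and read in the basis of columns,
has Gram matrix `Vᵀ * B * V`. Tangency says that this restriction is degenerate, i.e. that the Gram
determinant vanishes, and Cauchy–Binet expands that determinant in the Plücker coordinates of `V`.
-/

section CauchyBinet

open Set.powersetCard

variable {R : Type*} [CommRing R] {k : ℕ}

-- Factor `f` through `⋀^k M` and expand in the basis of `⋀^k M` induced by `b`.
theorem alternatingMap_apply_eq_sum_det_smul {ι M N : Type*} [Fintype ι] [LinearOrder ι]
    [AddCommGroup M] [Module R M] [AddCommGroup N] [Module R N]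
    (b : Module.Basis ι R M) (f : M [⋀^Fin k]→ₗ[R] N) (v : Fin k → M) :
    f v = ∑ s : Set.powersetCard ι k,
      (of fun i j ↦ b.repr (v i) (ofFinEmbEquiv.symm s j)).det •
        f (b ∘ ofFinEmbEquiv.symm s) := by
  have expand := congrArg (exteriorPower.alternatingMapLinearEquiv f)
    ((b.exteriorPower k).sum_repr (exteriorPower.ιMulti R k v))
  simpa [exteriorPower.basis_repr_apply, exteriorPower.ιMulti_family] using expand.symm

variable {m : Type*} [LinearOrder m]

/-- The Plücker coordinate, indexed by `s`, of the span of the columns of `V`: the maximal minor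
of `V` on the rows in `s`, taken in increasing order. -/
def pluckerCoord (V : Matrix m (Fin k) R) (s : Set.powersetCard m k) : R :=
  (V.submatrix (ofFinEmbEquiv.symm s) id).det

variable [Fintype m]

theorem det_mul_eq_sum_powersetCard (A : Matrix (Fin k) m R) (C : Matrix m (Fin k) R) :
    (A * C).det = ∑ s : Set.powersetCard m k,
      (A.submatrix id (ofFinEmbEquiv.symm s)).det *
        (C.submatrix (ofFinEmbEquiv.symm s) id).det := by
  let f := (detRowAlternating (R := R) (n := Fin k)).compLinearMap C.vecMulLinear
  have f_basis (e : Fin k → m) : f (Pi.basisFun R m ∘ e) = (C.submatrix e id).det :=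
    congrArg det <| by ext i j; simp
  calc (A * C).det
    _ = f A.row := rfl
    _ = ∑ s : Set.powersetCard m k, (A.submatrix id (ofFinEmbEquiv.symm s)).det •
          f (Pi.basisFun R m ∘ ofFinEmbEquiv.symm s) :=
      alternatingMap_apply_eq_sum_det_smul (Pi.basisFun R m) f A.row
    _ = _ := by simp only [f_basis, smul_eq_mul]

theorem pluckerCoord_diagonal_mul (b : m → R) (V : Matrix m (Fin k) R)
    (s : Set.powersetCard m k) :
    pluckerCoord (diagonal b * V) s = (∏ i ∈ s.1, b i) * pluckerCoord V s := by
  set e := ofFinEmbEquiv.symm s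
  have rows : (diagonal b * V).submatrix e id = diagonal (b ∘ e) * V.submatrix e id := by
    ext i j
    simp
  have prod_eq : ∏ j, b (e j) = ∏ i ∈ s.1, b i := by
    rw [← Finset.map_orderEmbOfFin_univ s.1 s.2, Finset.prod_map]
    rfl
  calc ((diagonal b * V).submatrix e id).det
    _ = (∏ j, b (e j)) * (V.submatrix e id).det := by
      rw [rows, det_mul, det_diagonal]
      rfl
    _ = (∏ i ∈ s.1, b i) * pluckerCoord V s := by rw [prod_eq, pluckerCoord]

theorem det_transpose_mul_diagonal_mul_eq_sum (b : m → R) (V : Matrix m (Fin k) R) :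
    (Vᵀ * diagonal b * V).det =
      ∑ s : Set.powersetCard m k, (∏ i ∈ s.1, b i) * pluckerCoord V s ^ 2 := by
  rw [Matrix.mul_assoc, det_mul_eq_sum_powersetCard]
  refine Finset.sum_congr rfl fun s _ ↦ ?_
  calc (Vᵀ.submatrix id (ofFinEmbEquiv.symm s)).det * pluckerCoord (diagonal b * V) s
    _ = pluckerCoord V s * pluckerCoord (diagonal b * V) s := by
      rw [← transpose_submatrix, det_transpose]
      rfl
    _ = (∏ i ∈ s.1, b i) * pluckerCoord V s ^ 2 := by
      rw [pluckerCoord_diagonal_mul]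
      ring

end CauchyBinet

theorem sum_attach_powersetCard_univ {α M : Type*} [Fintype α] [AddCommMonoid M] {k : ℕ}
    (f : Set.powersetCard α k → M) :
    ∑ s ∈ (Finset.powersetCard k (Finset.univ : Finset α)).attach,
      f ⟨s.1, (Finset.mem_powersetCard.mp s.2).2⟩ = ∑ s, f s :=
  Fintype.sum_equiv (Equiv.subtypeEquivRight <| by simp) _ _ fun _ ↦ rfl

theorem linearIndependent_col_of_rank_eq_card {K m n : Type*} [Field K] [Fintype n]
    {V : Matrix m n K} (hV : V.rank = Fintype.card n) : LinearIndependent K V.col := by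
  rw [linearIndependent_iff_card_eq_finrank_span, Set.finrank, ← rank_eq_finrank_span_cols, hV]

section Tangency

variable {R m n : Type*} [CommRing R] [Fintype m] [Fintype n]

/-- The linear subspace `P` is tangent to the cone `{x | x ⬝ᵥ B *ᵥ x = 0}`, for symmetric `B`:
some nonzero `v ∈ P` is orthogonal to all of `P`. Such a `v` lies on the cone, and `P` is contained
in the tangent space `{x | v ⬝ᵥ B *ᵥ x = 0}` there, which is everything if `v` is a singular point
of the cone, i.e. `v ᵥ* B = 0`. -/
def IsTangentToCone (B : Matrix m m R) (P : Submodule R (m → R)) : Prop :=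
  ∃ v ∈ P, v ≠ 0 ∧ ∀ w ∈ P, v ⬝ᵥ (B *ᵥ w) = 0

theorem mulVec_dotProduct_mulVec_mulVec (B : Matrix m m R) (V : Matrix m n R) (c d : n → R) :
    (V *ᵥ c) ⬝ᵥ (B *ᵥ (V *ᵥ d)) = (c ᵥ* (Vᵀ * B * V)) ⬝ᵥ d := by
  rw [← vecMul_vecMul, ← vecMul_vecMul, vecMul_transpose, dotProduct_mulVec, dotProduct_mulVec]

theorem isTangentToCone_range_mulVecLin_iff [IsDomain R] [DecidableEq n] (B : Matrix m m R)
    {V : Matrix m n R} (hV : LinearIndependent R V.col) :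
    IsTangentToCone B (LinearMap.range V.mulVecLin) ↔ (Vᵀ * B * V).det = 0 := by
  have mulVec_ne_zero (c : n → R) : V *ᵥ c ≠ 0 ↔ c ≠ 0 :=
    map_ne_zero_iff V.mulVecLin (mulVec_injective_iff.mpr hV)
  calc IsTangentToCone B (LinearMap.range V.mulVecLin)
    _ ↔ ∃ c, V *ᵥ c ≠ 0 ∧ ∀ d, (V *ᵥ c) ⬝ᵥ (B *ᵥ (V *ᵥ d)) = 0 := by
      simp only [IsTangentToCone, LinearMap.mem_range, mulVecLin_apply, exists_exists_eq_and,
        forall_exists_index, forall_apply_eq_imp_iff]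
    _ ↔ ∃ c ≠ 0, c ᵥ* (Vᵀ * B * V) = 0 := by
      simp only [mulVec_ne_zero, mulVec_dotProduct_mulVec_mulVec, dotProduct_eq_zero_iff]
    _ ↔ (Vᵀ * B * V).det = 0 := exists_vecMul_eq_zero_iff

theorem plucker_tangency_criterion_general [IsDomain R] [LinearOrder m] {k : ℕ} (b : m → R)
    {V : Matrix m (Fin k) R} (hV : LinearIndependent R V.col) :
    IsTangentToCone (diagonal b) (LinearMap.range V.mulVecLin) ↔
      ∑ s : Set.powersetCard m k, (∏ i ∈ s.1, b i) * pluckerCoord V s ^ 2 = 0 := by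
  rw [isTangentToCone_range_mulVecLin_iff _ hV, det_transpose_mul_diagonal_mul_eq_sum]

end Tangency

/-- A k-plane through the origin in ℝᵐ, spanned by the columns of a rank-k
matrix V, is tangent to the nondegenerate cone {xᵀBx = 0} (B = diag(b), all bᵢ ≠ 0) iff
its Plücker coordinates G_I (the k×k row minors of V) satisfy Σ_I (∏_{i∈I} bᵢ)·G_I² = 0. -/
theorem plucker_tangency_criterion {m k : ℕ} (b : Fin m → ℝ) (hb : ∀ i, b i ≠ 0)
    (B : Matrix (Fin m) (Fin m) ℝ) (hB : B = Matrix.diagonal b)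
    (V : Matrix (Fin m) (Fin k) ℝ) (hV : V.rank = k) :
    (∃ v : Fin m → ℝ, v ≠ 0 ∧ (∃ c : Fin k → ℝ, v = V *ᵥ c) ∧
      ∀ w : Fin m → ℝ, (∃ d : Fin k → ℝ, w = V *ᵥ d) → v ⬝ᵥ (B *ᵥ w) = 0)
    ↔ ∑ s ∈ (Finset.powersetCard k (Finset.univ : Finset (Fin m))).attach,
        (∏ i ∈ s.1, b i) *
          (Matrix.det (V.submatrix
            (fun j => (s.1.orderIsoOfFin ((Finset.mem_powersetCard.mp s.2).2) j).1)
            id)) ^ 2 = 0 := by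
  have general := plucker_tangency_criterion_general b
    (linearIndependent_col_of_rank_eq_card (hV.trans (Fintype.card_fin k).symm))
  rw [← sum_attach_powersetCard_univ] at general
  simpa [hB, IsTangentToCone, pluckerCoord, Set.powersetCard.ofFinEmbEquiv_symm_apply] using general
end
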